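/- arXiv:2505.18357 — 4 statements merged into one kernel-verified Lean document; each statement's English description precedes it below -/
import Mathlib

section
/- Let ι be a finite index set with value function v : ι → ℝ (v i > 0 for all i) and cost function c : ι → ℝ (c i > 0 for all i), and let W ∈ ℝ be a work requirement. Suppose x* : ι → ℝ is a fractional schedule (0 ≤ x* i ≤ 1 for all i) with ∑ i, x* i * v i = W, and suppose there exists a threshold θ ≥ 0 such that for every i, if v i / c i > θ then x* i = 1, and if v i / c i < θ then x* i = 0. Then x* is optimal: for every fractional schedule x (0 ≤ x i ≤ 1) with ∑ i, x i * v i ≥ W, one has ∑ i, x* i * c i ≤ ∑ i, x i * c i. -/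
/-- Optimality of threshold (greedy) fractional schedules: any fractional
schedule meeting the work requirement exactly and having the threshold
structure minimizes cost among all feasible fractional schedules. -/
theorem threshold_schedule_optimal {ι : Type*} [Fintype ι]
    (v c : ι → ℝ) (hv : ∀ i, 0 < v i) (hc : ∀ i, 0 < c i) (W : ℝ)
    (xstar : ι → ℝ) (hx0 : ∀ i, 0 ≤ xstar i) (hx1 : ∀ i, xstar i ≤ 1)
    (hW : ∑ i, xstar i * v i = W)
    (θ : ℝ) (hθ : 0 ≤ θ)
    (hhi : ∀ i, θ < v i / c i → xstar i = 1)
    (hlo : ∀ i, v i / c i < θ → xstar i = 0) :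
    ∀ x : ι → ℝ, (∀ i, 0 ≤ x i) → (∀ i, x i ≤ 1) →
      W ≤ ∑ i, x i * v i → ∑ i, xstar i * c i ≤ ∑ i, x i * c i := by
  intro x h0 h1 hf
  rw [← hW] at hf
  rcases hθ.eq_or_lt with h | hpos
  · subst h
    have hs : ∀ i, xstar i = 1 := fun i => hhi i (div_pos (hv i) (hc i))
    have hle : ∀ i ∈ Finset.univ, x i * v i ≤ xstar i * v i := fun i _ =>
      mul_le_mul_of_nonneg_right ((h1 i).trans (hs i).ge) (hv i).le
    have heq := (Finset.sum_eq_sum_iff_of_le hle).1 (le_antisymm (Finset.sum_le_sum hle) hf)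
    refine Finset.sum_le_sum fun i hi => ?_
    rw [mul_right_cancel₀ (hv i).ne' (heq i hi)]
  · have key : ∀ i ∈ Finset.univ,
        θ * (xstar i * c i) - θ * (x i * c i) ≤ xstar i * v i - x i * v i := by
      intro i _
      rcases lt_trichotomy θ (v i / c i) with h | h | h
      · have e := hhi i h
        rw [lt_div_iff₀ (hc i)] at h
        rw [e]
        nlinarith [mul_nonneg (sub_nonneg.2 (h1 i)) (sub_nonneg.2 h.le)]
      · rw [eq_div_iff (hc i).ne'] at h
        rw [← h]
        apply le_of_eq
        ring
      · have e := hlo i h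
        rw [div_lt_iff₀ (hc i)] at h
        rw [e]
        nlinarith [mul_nonneg (h0 i) (sub_nonneg.2 h.le)]
    have hsum := Finset.sum_le_sum key
    simp only [Finset.sum_sub_distrib, ← Finset.mul_sum] at hsum
    exact le_of_mul_le_mul_left (by linarith) hpos
end

section
/- Fractional form of Theorem 1 for a single elastic job: let there be T time slots with carbon intensities CI : Fin T → ℝ, CI t > 0 for all t, and K scale increments with an antitone marginal throughput profile p : Fin K → ℝ, p k > 0 for all k, and let W satisfy 0 ≤ W ≤ ∑ (t : Fin T), ∑ (k : Fin K), p k. Consider fractional schedules x : Fin T × Fin K → ℝ with 0 ≤ x (t,k) ≤ 1, feasibility ∑ (t,k), x (t,k) * p k ≥ W, and emissions ∑ (t,k), x (t,k) * CI t. Then there exists a feasible schedule x* that minimizes emissions among all feasible schedules and is a threshold schedule: for some θ ≥ 0, x* (t,k) = 1 whenever p k / CI t > θ and x* (t,k) = 0 whenever p k / CI t < θ. -/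
theorem exists_threshold_aux {ι : Type*} [Fintype ι] [Nonempty ι] (r p : ι → ℝ) (hp : ∀ i, 0 < p i)
    (W : ℝ) (hW0 : 0 ≤ W) (hW1 : W ≤ ∑ i, p i) :
    ∃ j : ι, (∑ i, if r j < r i then p i else 0) ≤ W ∧ W ≤ ∑ i, if r j ≤ r i then p i else 0 := by
  classical
  obtain ⟨m, hm⟩ := Finite.exists_min r
  obtain ⟨j, hj, hmax⟩ := Finset.exists_max_image
    (Finset.univ.filter fun j => W ≤ ∑ i, if r j ≤ r i then p i else 0) r
    ⟨m, by simpa [hm] using hW1⟩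
  simp only [Finset.mem_filter, Finset.mem_univ, true_and] at hj hmax
  refine ⟨j, ?_, hj⟩
  by_contra hlt
  push Not at hlt
  have hne : (Finset.univ.filter fun i => r j < r i).Nonempty := by
    rw [Finset.nonempty_iff_ne_empty]
    intro he
    rw [← Finset.sum_filter, he, Finset.sum_empty] at hlt
    linarith
  obtain ⟨k, hk, hmin⟩ := Finset.exists_min_image _ r hne
  simp only [Finset.mem_filter, Finset.mem_univ, true_and] at hk hmin
  have := hmax k (hlt.le.trans (Finset.sum_le_sum fun i _ => ?_))
  · linarith
  · by_cases h : r j < r i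
    · simp [h, hmin i h]
    · rw [if_neg h]
      split_ifs
      · exact (hp i).le
      · exact le_rfl

/-- Fractional form of Theorem 1 for a single elastic job: there exists a
feasible fractional schedule minimizing emissions that is a threshold schedule
with respect to the efficiency ratio `p k / CI t`. -/
theorem single_job_threshold_optimal (T K : ℕ)
    (CI : Fin T → ℝ) (hCI : ∀ t, 0 < CI t)
    (p : Fin K → ℝ) (hp : ∀ k, 0 < p k) (hanti : Antitone p)
    (W : ℝ) (hW0 : 0 ≤ W) (hW1 : W ≤ ∑ t : Fin T, ∑ k : Fin K, p k) :
    ∃ xstar : Fin T × Fin K → ℝ,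
      (∀ tk, 0 ≤ xstar tk) ∧ (∀ tk, xstar tk ≤ 1) ∧
      (W ≤ ∑ tk : Fin T × Fin K, xstar tk * p tk.2) ∧
      (∀ x : Fin T × Fin K → ℝ, (∀ tk, 0 ≤ x tk) → (∀ tk, x tk ≤ 1) →
        W ≤ ∑ tk : Fin T × Fin K, x tk * p tk.2 →
        ∑ tk : Fin T × Fin K, xstar tk * CI tk.1 ≤
          ∑ tk : Fin T × Fin K, x tk * CI tk.1) ∧
      (∃ θ : ℝ, 0 ≤ θ ∧
        (∀ tk : Fin T × Fin K, θ < p tk.2 / CI tk.1 → xstar tk = 1) ∧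
        (∀ tk : Fin T × Fin K, p tk.2 / CI tk.1 < θ → xstar tk = 0)) := by
  classical
  rw [← Fintype.sum_prod_type' (f := fun (_ : Fin T) (k : Fin K) => p k)] at hW1
  rcases isEmpty_or_nonempty (Fin T × Fin K) with he | hne
  · refine ⟨fun _ => 0, by simp, by simp, by simpa using hW1, by simp, 0, le_rfl, ?_, ?_⟩ <;>
      exact fun tk => isEmptyElim tk
  obtain ⟨j, hA, hB⟩ := exists_threshold_aux (fun tk : Fin T × Fin K => p tk.2 / CI tk.1)
    (fun tk => p tk.2) (fun tk => hp _) W hW0 hW1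
  have hθ : 0 < p j.2 / CI j.1 := div_pos (hp _) (hCI _)
  generalize p j.2 / CI j.1 = θ at hA hB hθ
  set A := ∑ tk : Fin T × Fin K, if θ < p tk.2 / CI tk.1 then p tk.2 else 0 with hAd
  set B := ∑ tk : Fin T × Fin K, if θ ≤ p tk.2 / CI tk.1 then p tk.2 else 0 with hBd
  obtain ⟨l, hl0, hl1, hl⟩ : ∃ l : ℝ, 0 ≤ l ∧ l ≤ 1 ∧ A + l * (B - A) = W := by
    rcases (hA.trans hB).eq_or_lt with h | h
    · exact ⟨0, le_rfl, zero_le_one, by linarith⟩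
    · have h' : 0 < B - A := by linarith
      refine ⟨(W - A) / (B - A), div_nonneg (by linarith) h'.le, ?_, ?_⟩
      · rw [div_le_one h']; linarith
      · rw [div_mul_cancel₀ _ h'.ne']; ring
  let y : Fin T × Fin K → ℝ := fun tk =>
    if θ < p tk.2 / CI tk.1 then 1 else if θ ≤ p tk.2 / CI tk.1 then l else 0
  have hy1 : ∀ tk, θ < p tk.2 / CI tk.1 → y tk = 1 := fun tk h => if_pos h
  have hy0 : ∀ tk, p tk.2 / CI tk.1 < θ → y tk = 0 := fun tk h => by
    simp [y, not_lt.2 h.le, not_le.2 h]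
  have hsum : ∑ tk, y tk * p tk.2 = W := by
    rw [← hl, hAd, hBd, ← Finset.sum_sub_distrib, Finset.mul_sum, ← Finset.sum_add_distrib]
    refine Finset.sum_congr rfl fun tk _ => ?_
    by_cases h1 : θ < p tk.2 / CI tk.1
    · simp [y, h1, h1.le]
    · by_cases h2 : θ ≤ p tk.2 / CI tk.1 <;> simp [y, h1, h2]
  refine ⟨y, ?_, ?_, hsum.ge, ?_, θ, hθ.le, hy1, hy0⟩
  · intro tk
    simp only [y]
    split_ifs <;> linarith
  · intro tk
    simp only [y]
    split_ifs <;> linarith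
  · intro x hx0 hx1 hx
    have key : ∑ tk, (x tk - y tk) * p tk.2 ≤ ∑ tk, θ * ((x tk - y tk) * CI tk.1) := by
      refine Finset.sum_le_sum fun tk _ => ?_
      have hc := hCI tk.1
      rcases lt_trichotomy θ (p tk.2 / CI tk.1) with h | h | h
      · rw [hy1 tk h]
        rw [lt_div_iff₀ hc] at h
        nlinarith [hx1 tk]
      · rw [eq_div_iff hc.ne'] at h
        rw [← h]
        exact le_of_eq (by ring)
      · rw [hy0 tk h]
        rw [div_lt_iff₀ hc] at h
        nlinarith [hx0 tk]
    rw [← Finset.mul_sum] at key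
    simp only [sub_mul, Finset.sum_sub_distrib] at key
    have h0 : 0 ≤ θ * (∑ tk, x tk * CI tk.1 - ∑ tk, y tk * CI tk.1) := by linarith
    have := nonneg_of_mul_nonneg_right h0 hθ
    linarith
end

section
/- Optimality of threshold allocations under a capacity constraint (single slot, multiple jobs): let J be a finite set of jobs, each with an antitone nonnegative marginal throughput profile p j : ℕ → ℝ, and define T j n = ∑ i ∈ Finset.range n, p j i. Let M be a natural number and suppose a : J → ℕ satisfies ∑ j, a j = M together with the threshold property: for all jobs j and j', if a j ≥ 1 then p j (a j - 1) ≥ p j' (a j'). Then for every allocation b : J → ℕ with ∑ j, b j ≤ M, we have ∑ j, T j (b j) ≤ ∑ j, T j (a j). -/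
theorem threshold_aux (f : ℕ → ℝ) (hf : Antitone f) (l : ℝ) (a b : ℕ)
    (h1 : f a ≤ l) (h2 : 1 ≤ a → l ≤ f (a - 1)) :
    ∑ i ∈ Finset.range b, f i ≤ ∑ i ∈ Finset.range a, f i + l * ((b : ℝ) - a) := by
  rcases le_total a b with h | h
  · induction b, h using Nat.le_induction with
    | base => simp
    | succ n hn ih =>
      rw [Finset.sum_range_succ]
      have := hf hn
      push_cast
      linarith
  · have key : ∑ i ∈ Finset.range b, (f i - l) ≤ ∑ i ∈ Finset.range a, (f i - l) := by
      apply Finset.sum_le_sum_of_subset_of_nonneg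
      · exact Finset.range_subset_range.2 h
      · intro i hi _
        have hi' := Finset.mem_range.1 hi
        have h3 := h2 (by omega)
        have h4 : f (a - 1) ≤ f i := hf (by omega)
        linarith
    simp only [Finset.sum_sub_distrib, Finset.sum_const, Finset.card_range, nsmul_eq_mul] at key
    linarith

/-- Optimality of threshold allocations under a capacity constraint in a
single slot: a full allocation with the threshold property maximizes total
cumulative throughput among all allocations within capacity. -/
theorem threshold_allocation_optimal {J : Type*} [Fintype J]
    (p : J → ℕ → ℝ) (hanti : ∀ j, Antitone (p j)) (hpos : ∀ j i, 0 ≤ p j i)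
    (M : ℕ) (a : J → ℕ) (ha : ∑ j, a j = M)
    (hthresh : ∀ j j', 1 ≤ a j → p j' (a j') ≤ p j (a j - 1)) :
    ∀ b : J → ℕ, (∑ j, b j) ≤ M →
      (∑ j, ∑ i ∈ Finset.range (b j), p j i) ≤
        ∑ j, ∑ i ∈ Finset.range (a j), p j i := by
  intro b hb
  rcases isEmpty_or_nonempty J with hJ | hJ
  · simp
  · obtain ⟨k, hk⟩ := Finite.exists_max (fun j => p j (a j))
    have h := Finset.sum_le_sum (s := Finset.univ) fun j _ =>
      threshold_aux (p j) (hanti j) (p k (a k)) (a j) (b j) (hk j) (fun h => hthresh j k h)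
    rw [Finset.sum_add_distrib, ← Finset.mul_sum, Finset.sum_sub_distrib] at h
    have hc : (∑ j, (b j : ℝ)) ≤ ∑ j, (a j : ℝ) := by
      rw [← ha] at hb
      exact_mod_cast hb
    have := mul_nonneg (hpos k (a k)) (sub_nonneg.2 hc)
    linarith
end

section
/- No job is starved by an optimal allocation: let J be a finite set of jobs, each with an antitone nonnegative marginal throughput profile p j : ℕ → ℝ satisfying the normalization p j 0 = 1 and p j i < 1 for all i ≥ 1, and define T j n = ∑ i ∈ Finset.range n, p j i. Let M be a natural number with M ≥ |J|. Then every allocation a : J → ℕ with ∑ j, a j = M that maximizes ∑ j, T j (a j) over all allocations summing to M satisfies a j ≥ 1 for every job j. -/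
/-- No job is starved by an optimal allocation: if profiles are normalized so
that the first server contributes throughput `1` and later servers strictly
less, and capacity covers all jobs, then any throughput-maximizing allocation
gives every job at least one server. -/
theorem optimal_allocation_no_starvation {J : Type*} [Fintype J]
    (p : J → ℕ → ℝ) (hanti : ∀ j, Antitone (p j)) (hpos : ∀ j i, 0 ≤ p j i)
    (hnorm : ∀ j, p j 0 = 1) (hlt : ∀ j i, 1 ≤ i → p j i < 1)
    (M : ℕ) (hM : Fintype.card J ≤ M)
    (a : J → ℕ) (ha : ∑ j, a j = M)
    (hopt : ∀ b : J → ℕ, (∑ j, b j = M) →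
      (∑ j, ∑ i ∈ Finset.range (b j), p j i) ≤
        ∑ j, ∑ i ∈ Finset.range (a j), p j i) :
    ∀ j, 1 ≤ a j := by
  classical
  intro j
  by_contra hj
  have hj0 : a j = 0 := by omega
  obtain ⟨k, hk⟩ : ∃ k, 2 ≤ a k := by
    by_contra! h
    have h1 : ∑ i, a i < ∑ _i : J, 1 :=
      Finset.sum_lt_sum (fun i _ => by have := h i; omega) ⟨j, Finset.mem_univ j, by omega⟩
    simp at h1
    omega
  have hkj : k ≠ j := by rintro rfl; omega
  obtain ⟨n, hn⟩ : ∃ n, a k = n + 2 := ⟨a k - 2, by omega⟩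
  let b : J → ℕ := fun i => if i = j then 1 else if i = k then n + 1 else a i
  have hbj : b j = 1 := by simp [b]
  have hbk : b k = n + 1 := by simp [b, hkj]
  have hk' : k ∈ Finset.univ.erase j := by simp [hkj]
  have hrest : ∀ i ∈ (Finset.univ.erase j).erase k, b i = a i := by
    intro i hi
    simp only [Finset.mem_erase] at hi
    simp [b, hi.1, hi.2.1]
  have hs : Finset.sum ((Finset.univ.erase j).erase k) b
      = Finset.sum ((Finset.univ.erase j).erase k) a := Finset.sum_congr rfl hrest
  have hb : ∑ i, b i = M := by
    have e1 := Finset.add_sum_erase _ b (Finset.mem_univ j)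
    have e2 := Finset.add_sum_erase _ b hk'
    have e3 := Finset.add_sum_erase _ a (Finset.mem_univ j)
    have e4 := Finset.add_sum_erase _ a hk'
    have hs' : ∑ x ∈ (Finset.univ.erase j).erase k, b x
      = ∑ x ∈ (Finset.univ.erase j).erase k, a x := hs
    linarith
  have h := hopt b hb
  have hr : ∑ i ∈ (Finset.univ.erase j).erase k, ∑ l ∈ Finset.range (b i), p i l
      = ∑ i ∈ (Finset.univ.erase j).erase k, ∑ l ∈ Finset.range (a i), p i l :=
    Finset.sum_congr rfl (fun i hi => by rw [hrest i hi])
  rw [← Finset.add_sum_erase _ _ (Finset.mem_univ j), ← Finset.add_sum_erase _ _ hk',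
    ← Finset.add_sum_erase _ (fun i => ∑ l ∈ Finset.range (a i), p i l) (Finset.mem_univ j),
    ← Finset.add_sum_erase _ (fun i => ∑ l ∈ Finset.range (a i), p i l) hk', hr] at h
  simp only [hbj, hbk, hj0, hn, Finset.sum_range_succ, Finset.sum_range_zero] at h
  have h1 := hnorm j
  have h2 := hlt k (n + 1) (by omega)
  linarith
end
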